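/- (S-level-minus-link pairs) Let n ≥ 3, let l₁ = aₙ and l₂ = b₁ be the two link elements of M_{n,n}, and let x ∈ {a₁,…,aₙ} ∖ {aₙ}. If S = {b₁,…,bₙ} ∖ {b₁} and T = {l₁, l₂, x}, then (S, T) is a maximal ST-pair of M_{n,n}. Dually, if y ∈ {b₁,…,bₙ} ∖ {b₁}, S = {a₁,…,aₙ} ∖ {aₙ} and T = {l₁, l₂, y}, then (S, T) is a maximal ST-pair of M_{n,n}. -/

import Mathlib

/-- The underlying set of the lattice `M_{n,n}`: a bottom element `0`, a top
element `1`, and two levels `a₁, …, aₙ` and `b₁, …, bₙ`.  Here `a i` (for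
`i : Fin n`) stands for `a_{i+1}` and `b j` for `b_{j+1}`, so the link elements
are `aₙ = a ⟨n-1, _⟩` and `b₁ = b ⟨0, _⟩`. -/
inductive Mnn (n : ℕ) : Type where
  | bot : Mnn n
  | top : Mnn n
  | a : Fin n → Mnn n
  | b : Fin n → Mnn n
deriving DecidableEq

namespace Mnn

/-- The order of `M_{n,n}`: `0` is least, `1` is greatest, `aᵢ ≤ b₁` for every
`i`, `aₙ ≤ bⱼ` for every `j`, and there are no other comparabilities besides
those forced by reflexivity. -/
def le {n : ℕ} : Mnn n → Mnn n → Prop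
  | .bot, _ => True
  | .top, .top => True
  | .top, .bot => False
  | .top, .a _ => False
  | .top, .b _ => False
  | .a _, .top => True
  | .a _, .bot => False
  | .a i, .a j => i = j
  | .a i, .b j => (j : ℕ) = 0 ∨ (i : ℕ) = n - 1
  | .b _, .top => True
  | .b _, .bot => False
  | .b _, .a _ => False
  | .b i, .b j => i = j

/-- The join operation of `M_{n,n}`. -/
def sup {n : ℕ} : Mnn n → Mnn n → Mnn n
  | .bot, x => x
  | .top, _ => .top
  | .a i, .bot => .a i
  | .a _, .top => .top
  | .a i, .a j => if i = j then .a i else .b ⟨0, Nat.lt_of_le_of_lt (Nat.zero_le _) i.isLt⟩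
  | .a i, .b j => if (j : ℕ) = 0 ∨ (i : ℕ) = n - 1 then .b j else .top
  | .b i, .bot => .b i
  | .b _, .top => .top
  | .b i, .a j => if (i : ℕ) = 0 ∨ (j : ℕ) = n - 1 then .b i else .top
  | .b i, .b j => if i = j then .b i else .top

/-- The meet operation of `M_{n,n}`. -/
def inf {n : ℕ} : Mnn n → Mnn n → Mnn n
  | .bot, _ => .bot
  | .top, x => x
  | .a _, .bot => .bot
  | .a i, .top => .a i
  | .a i, .a j => if i = j then .a i else .bot
  | .a i, .b j => if (j : ℕ) = 0 ∨ (i : ℕ) = n - 1 then .a i else .bot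
  | .b _, .bot => .bot
  | .b i, .top => .b i
  | .b i, .a j => if (i : ℕ) = 0 ∨ (j : ℕ) = n - 1 then .a j else .bot
  | .b i, .b j => if i = j then .b i
      else .a ⟨n - 1, Nat.sub_lt (Nat.lt_of_le_of_lt (Nat.zero_le _) i.isLt) Nat.one_pos⟩

theorem le_refl' {n : ℕ} (x : Mnn n) : le x x := by cases x <;> simp [le]

theorem le_trans' {n : ℕ} (x y z : Mnn n) (hxy : le x y) (hyz : le y z) : le x z := by
  cases x <;> cases y <;> cases z <;> simp_all [le] <;> omega

theorem le_antisymm' {n : ℕ} (x y : Mnn n) (hxy : le x y) (hyx : le y x) : x = y := by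
  cases x <;> cases y <;> simp_all [le]

theorem le_sup_left' {n : ℕ} (x y : Mnn n) : le x (sup x y) := by
  cases x <;> cases y <;> dsimp only [sup] <;> (try split_ifs) <;> simp_all [le]

theorem le_sup_right' {n : ℕ} (x y : Mnn n) : le y (sup x y) := by
  cases x <;> cases y <;> dsimp only [sup] <;> (try split_ifs) <;> simp_all [le]

theorem sup_le' {n : ℕ} (x y z : Mnn n) (hxz : le x z) (hyz : le y z) :
    le (sup x y) z := by
  cases x <;> cases y <;> cases z <;> dsimp only [sup] <;> (try split_ifs) <;>
    simp_all [le, Fin.ext_iff] <;> omega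

theorem inf_le_left' {n : ℕ} (x y : Mnn n) : le (inf x y) x := by
  cases x <;> cases y <;> dsimp only [inf] <;> (try split_ifs) <;> simp_all [le]

theorem inf_le_right' {n : ℕ} (x y : Mnn n) : le (inf x y) y := by
  cases x <;> cases y <;> dsimp only [inf] <;> (try split_ifs) <;> simp_all [le]

theorem le_inf' {n : ℕ} (x y z : Mnn n) (hxy : le x y) (hxz : le x z) :
    le x (inf y z) := by
  cases x <;> cases y <;> cases z <;> dsimp only [inf] <;> (try split_ifs) <;>
    simp_all [le, Fin.ext_iff] <;> omega

/-- `M_{n,n}` is a lattice. -/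
instance instLattice (n : ℕ) : Lattice (Mnn n) where
  le := le
  sup := sup
  inf := inf
  le_refl := le_refl'
  le_trans := le_trans'
  le_antisymm := le_antisymm'
  le_sup_left := le_sup_left'
  le_sup_right := le_sup_right'
  sup_le := sup_le'
  inf_le_left := inf_le_left'
  inf_le_right := inf_le_right'
  le_inf := le_inf'

/-- `M_{n,n}* = M_{n,n} ∖ {0, 1}`, the set of non-identity elements. -/
def star (n : ℕ) : Set (Mnn n) := {x | x ≠ .bot ∧ x ≠ .top}

/-- The level `{a₁, …, aₙ}` of `M_{n,n}`. -/
def aLevel (n : ℕ) : Set (Mnn n) := Set.range Mnn.a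

/-- The level `{b₁, …, bₙ}` of `M_{n,n}`. -/
def bLevel (n : ℕ) : Set (Mnn n) := Set.range Mnn.b

/-- The link element `aₙ` of the level `{a₁, …, aₙ}`. -/
def aLink (n : ℕ) (h : 0 < n) : Mnn n := .a ⟨n - 1, Nat.sub_lt h Nat.one_pos⟩

/-- The link element `b₁` of the level `{b₁, …, bₙ}`. -/
def bLink (n : ℕ) (h : 0 < n) : Mnn n := .b ⟨0, h⟩

end Mnn

/-- `L` is `ST`-meet distributive. -/
def IsSTMeetDistrib {α : Type*} [Lattice α] (S T : Set α) : Prop :=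
  ∀ s ∈ S, ∀ t₁ ∈ T, ∀ t₂ ∈ T, s ⊓ (t₁ ⊔ t₂) = (s ⊓ t₁) ⊔ (s ⊓ t₂)

/-- `L` is `ST`-join distributive. -/
def IsSTJoinDistrib {α : Type*} [Lattice α] (S T : Set α) : Prop :=
  ∀ s ∈ S, ∀ t₁ ∈ T, ∀ t₂ ∈ T, s ⊔ (t₁ ⊓ t₂) = (s ⊔ t₁) ⊓ (s ⊔ t₂)

/-- `L` is `ST`-distributive. -/
def IsSTDistrib {α : Type*} [Lattice α] (S T : Set α) : Prop :=
  IsSTMeetDistrib S T ∧ IsSTJoinDistrib S T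

/-- `(S, T)` is a maximal `ST`-pair of `M_{n,n}` (subject to the conditions of
the search problem: `S, T ⊆ M_{n,n}*`, `S ∩ T = ∅`, `S ≠ ∅`, `T ≠ ∅`). -/
def MaximalSTPair (n : ℕ) (S T : Set (Mnn n)) : Prop :=
  S ⊆ Mnn.star n ∧ T ⊆ Mnn.star n ∧ S ∩ T = ∅ ∧ S.Nonempty ∧ T.Nonempty ∧
  IsSTDistrib S T ∧
  (¬ ∃ S' : Set (Mnn n), S ⊂ S' ∧ S' ⊆ Mnn.star n ∧ S' ∩ T = ∅ ∧ IsSTDistrib S' T) ∧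
  (¬ ∃ T' : Set (Mnn n), T ⊂ T' ∧ T' ⊆ Mnn.star n ∧ S ∩ T' = ∅ ∧ IsSTDistrib S T')

/-!
For `T = {aₙ, b₁, aᵢ}` one has `b₁ = aₙ ⊔ aᵢ`, and every `s ∈ S` meets `b₁` in `aₙ`;
this alone makes `(S, T)` distributive. The only elements left to add to `S` or `T` are further
non-link atoms `aₖ`. Distinct atoms are disjoint and join to `b₁`, so distributivity fails
because a nonzero meet with `b₁` would have to be a join of two zero meets: `aₖ ⊓ (aₙ ⊔ aᵢ) = aₖ`
when `aₖ` is added to `S`, and `s ⊓ (aₖ ⊔ aᵢ) = aₙ` when it is added to `T`. The second half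
follows from the anti-automorphism of `M_{n,n}` that exchanges the levels.
-/

namespace IsSTDistrib

variable {α β : Type*} [Lattice α] {S S' T T' : Set α}

theorem mono (hS : S ⊆ S') (hT : T ⊆ T') (h : IsSTDistrib S' T') : IsSTDistrib S T :=
  ⟨fun s hs t₁ h₁ t₂ h₂ => h.1 s (hS hs) t₁ (hT h₁) t₂ (hT h₂),
    fun s hs t₁ h₁ t₂ h₂ => h.2 s (hS hs) t₁ (hT h₁) t₂ (hT h₂)⟩

theorem image_ofDual [Lattice β] {F : Type*} [FunLike F α βᵒᵈ] [LatticeHomClass F α βᵒᵈ]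
    (f : F) (h : IsSTDistrib S T) :
    IsSTDistrib ((fun x => OrderDual.ofDual (f x)) '' S)
      ((fun x => OrderDual.ofDual (f x)) '' T) := by
  constructor <;> rintro _ ⟨s, hs, rfl⟩ _ ⟨t₁, h₁, rfl⟩ _ ⟨t₂, h₂, rfl⟩
  · simpa only [map_sup, map_inf, ofDual_sup, ofDual_inf] using
      congrArg (fun x => OrderDual.ofDual (f x)) (h.2 s hs t₁ h₁ t₂ h₂)
  · simpa only [map_sup, map_inf, ofDual_sup, ofDual_inf] using
      congrArg (fun x => OrderDual.ofDual (f x)) (h.1 s hs t₁ h₁ t₂ h₂)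

end IsSTDistrib

section Lattice

variable {α : Type*} [Lattice α] {S T : Set α}

theorem isSTDistrib_triple_of_inf_eq {l m x : α} (hm : l ⊔ x = m)
    (hsm : ∀ s ∈ S, s ⊓ m = l) : IsSTDistrib S {l, m, x} := by
  subst hm
  have hl (s) (hs : s ∈ S) : l ≤ s := (hsm s hs).ge.trans inf_le_left
  constructor <;> intro s hs t₁ ht₁ t₂ ht₂ <;>
    simp only [Set.mem_insert_iff, Set.mem_singleton_iff] at ht₁ ht₂
  · have inf_left : s ⊓ l = l := inf_eq_right.2 (hl s hs)
    have inf_right : s ⊓ x ≤ l := (inf_le_inf_left s le_sup_right).trans_eq (hsm s hs)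
    rcases ht₁ with h₁ | h₁ | h₁ <;> rcases ht₂ with h₂ | h₂ | h₂ <;>
      simp [h₁, h₂, hsm s hs, inf_left, inf_right, sup_comm x l]
  · have sup_left : s ⊔ l = s := sup_eq_left.2 (hl s hs)
    have sup_join : s ⊔ (l ⊔ x) = s ⊔ x := by rw [← sup_assoc, sup_left]
    have inf_le : l ⊓ x ≤ s := inf_le_left.trans (hl s hs)
    rcases ht₁ with h₁ | h₁ | h₁ <;> rcases ht₂ with h₂ | h₂ | h₂ <;>
      simp [h₁, h₂, sup_left, sup_join, inf_le, inf_comm x l]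

theorem not_isSTDistrib_of_disjoint [OrderBot α] {s t₁ t₂ : α} (hs : s ∈ S) (ht₁ : t₁ ∈ T)
    (ht₂ : t₂ ∈ T) (h₁ : Disjoint s t₁) (h₂ : Disjoint s t₂) (h : ¬ Disjoint s (t₁ ⊔ t₂)) :
    ¬ IsSTDistrib S T := fun hd =>
  h <| disjoint_iff.2 <| by rw [hd.1 s hs t₁ ht₁ t₂ ht₂, h₁.eq_bot, h₂.eq_bot, sup_bot_eq]

end Lattice

theorem MaximalSTPair.of_insert {n : ℕ} {S T : Set (Mnn n)} (hS : S ⊆ Mnn.star n)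
    (hT : T ⊆ Mnn.star n) (hST : Disjoint S T) (hSne : S.Nonempty) (hTne : T.Nonempty)
    (h : IsSTDistrib S T)
    (hmaxS : ∀ x ∈ Mnn.star n, x ∉ S → x ∉ T → ¬ IsSTDistrib (insert x S) T)
    (hmaxT : ∀ x ∈ Mnn.star n, x ∉ S → x ∉ T → ¬ IsSTDistrib S (insert x T)) :
    MaximalSTPair n S T := by
  refine ⟨hS, hT, hST.inter_eq, hSne, hTne, h, ?_, ?_⟩
  · rintro ⟨S', hSS', hS', hdisj, hd⟩
    obtain ⟨x, hx, hxS⟩ := Set.exists_of_ssubset hSS'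
    have hxT : x ∉ T := Set.disjoint_left.1 (Set.disjoint_iff_inter_eq_empty.2 hdisj) hx
    exact hmaxS x (hS' hx) hxS hxT (hd.mono (Set.insert_subset hx hSS'.subset) subset_rfl)
  · rintro ⟨T', hTT', hT', hdisj, hd⟩
    obtain ⟨x, hx, hxT⟩ := Set.exists_of_ssubset hTT'
    have hxS : x ∉ S := Set.disjoint_right.1 (Set.disjoint_iff_inter_eq_empty.2 hdisj) hx
    exact hmaxT x (hT' hx) hxS hxT (hd.mono subset_rfl (Set.insert_subset hx hTT'.subset))

namespace Mnn

variable {n : ℕ} {i j : Fin n}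

instance instBoundedOrder (n : ℕ) : BoundedOrder (Mnn n) where
  bot := bot
  top := top
  bot_le _ := trivial
  le_top x := by cases x <;> trivial

theorem star_eq_union (n : ℕ) : star n = aLevel n ∪ bLevel n := by
  ext x
  cases x <;> simp [star, aLevel, bLevel]

theorem disjoint_aLevel_bLevel (n : ℕ) : Disjoint (aLevel n) (bLevel n) := by
  rw [Set.disjoint_left]
  rintro _ ⟨i, rfl⟩ ⟨j, hj⟩
  cases hj

theorem a_ne_bot (i : Fin n) : a i ≠ ⊥ := nofun

theorem a_le_bLink (i : Fin n) (h : 0 < n) : a i ≤ bLink n h := Or.inl rfl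

theorem aLink_le_b (h : 0 < n) (j : Fin n) : aLink n h ≤ b j := Or.inr rfl

theorem disjoint_a_a (hij : i ≠ j) : Disjoint (a i) (a j) := disjoint_iff.2 (if_neg hij)

theorem a_sup_a (h : 0 < n) (hij : i ≠ j) : a i ⊔ a j = bLink n h := if_neg hij

theorem aLink_sup_a {h : 0 < n} (hi : a i ≠ aLink n h) : aLink n h ⊔ a i = bLink n h :=
  a_sup_a h fun hi' => hi (congrArg a hi'.symm)

theorem b_inf_b (h : 0 < n) (hij : i ≠ j) : b i ⊓ b j = aLink n h := if_neg hij

theorem disjoint_b_a {h : 0 < n} (hj : b j ≠ bLink n h) (hi : a i ≠ aLink n h) :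
    Disjoint (b j) (a i) :=
  disjoint_iff.2 <| if_neg <| not_or.2
    ⟨fun hj' => hj (congrArg b (Fin.ext hj')), fun hi' => hi (congrArg a (Fin.ext hi'))⟩

section Dual

/-- The order-reversing involution of `M_{n,n}` exchanging `aᵢ` and `bₙ₊₁₋ᵢ`. -/
def dual : Mnn n → Mnn n
  | bot => top
  | top => bot
  | a i => b i.rev
  | b j => a j.rev

theorem dual_involutive : Function.Involutive (dual (n := n))
  | bot | top => rfl
  | a i => congrArg a i.rev_rev
  | b j => congrArg b j.rev_rev

theorem dual_le_dual_iff {x y : Mnn n} : dual x ≤ dual y ↔ y ≤ x := by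
  change le (dual x) (dual y) ↔ le y x
  cases x <;> cases y <;> simp [le, dual, Fin.ext_iff] <;> omega

/-- The self-duality of `M_{n,n}` as an isomorphism with its order dual, through which lattice
identities are transported along `dual`. -/
def dualIso (n : ℕ) : Mnn n ≃o (Mnn n)ᵒᵈ where
  toEquiv := dual_involutive.toPerm.trans OrderDual.toDual
  map_rel_iff' := dual_le_dual_iff

theorem dual_aLink (h : 0 < n) : dual (aLink n h) = bLink n h :=
  congrArg b <| Fin.ext <| by simp only [Fin.val_rev]; omega

theorem dual_bLink (h : 0 < n) : dual (bLink n h) = aLink n h := by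
  rw [← dual_aLink, dual_involutive]

theorem b_rev_ne_bLink {h : 0 < n} (hi : a i ≠ aLink n h) : b i.rev ≠ bLink n h := by
  rw [← dual_aLink]
  exact dual_involutive.injective.ne hi

theorem a_rev_ne_aLink {h : 0 < n} (hj : b j ≠ bLink n h) : a j.rev ≠ aLink n h := by
  rw [← dual_bLink]
  exact dual_involutive.injective.ne hj

theorem image_dual_image_dual (S : Set (Mnn n)) : dual '' (dual '' S) = S := by
  rw [← Set.image_comp, dual_involutive.comp_self, Set.image_id]

theorem image_dual_bLevel (n : ℕ) : dual '' bLevel n = aLevel n := by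
  rw [bLevel, ← Set.range_comp]
  exact Fin.rev_surjective.range_comp a

theorem image_dual_aLevel (n : ℕ) : dual '' aLevel n = bLevel n := by
  rw [← image_dual_bLevel, image_dual_image_dual]

theorem image_dual_star (n : ℕ) : dual '' star n = star n := by
  rw [star_eq_union, Set.image_union, image_dual_aLevel, image_dual_bLevel, Set.union_comm]

end Dual

end Mnn

section Dual

open Mnn

variable {n : ℕ} {S T : Set (Mnn n)}

theorem IsSTDistrib.image_dual (h : IsSTDistrib S T) : IsSTDistrib (dual '' S) (dual '' T) :=
  h.image_ofDual (dualIso n)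

theorem MaximalSTPair.image_dual (h : MaximalSTPair n S T) :
    MaximalSTPair n (dual '' S) (dual '' T) := by
  obtain ⟨hS, hT, hST, hSne, hTne, hd, hmaxS, hmaxT⟩ := h
  have image_subset_star {U : Set (Mnn n)} (hU : U ⊆ star n) : dual '' U ⊆ star n :=
    (Set.image_mono hU).trans_eq (image_dual_star n)
  have image_inter_eq_empty {U V : Set (Mnn n)} (hUV : U ∩ V = ∅) : dual '' U ∩ dual '' V = ∅ := by
    rw [← Set.image_inter dual_involutive.injective, hUV, Set.image_empty]
  have ssubset_image {U V : Set (Mnn n)} (hUV : dual '' U ⊂ V) : U ⊂ dual '' V := by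
    simpa only [image_dual_image_dual] using dual_involutive.injective.image_strictMono hUV
  refine ⟨image_subset_star hS, image_subset_star hT, image_inter_eq_empty hST, hSne.image _,
    hTne.image _, hd.image_dual, ?_, ?_⟩
  · rintro ⟨S', hSS', hS', hdisj, hd'⟩
    refine hmaxS ⟨dual '' S', ssubset_image hSS', image_subset_star hS', ?_, ?_⟩
    · simpa only [image_dual_image_dual] using image_inter_eq_empty hdisj
    · simpa only [image_dual_image_dual] using hd'.image_dual
  · rintro ⟨T', hTT', hT', hdisj, hd'⟩
    refine hmaxT ⟨dual '' T', ssubset_image hTT', image_subset_star hT', ?_, ?_⟩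
    · simpa only [image_dual_image_dual] using image_inter_eq_empty hdisj
    · simpa only [image_dual_image_dual] using hd'.image_dual

end Dual

namespace Mnn

variable {n : ℕ} {h : 0 < n} {i j k : Fin n}

theorem isSTDistrib_bLevel_sdiff (hi : a i ≠ aLink n h) :
    IsSTDistrib (bLevel n \ {bLink n h}) {aLink n h, bLink n h, a i} := by
  refine isSTDistrib_triple_of_inf_eq (aLink_sup_a hi) ?_
  rintro _ ⟨⟨j, rfl⟩, hj⟩
  exact b_inf_b h fun hj' => hj (congrArg b hj')

theorem not_isSTDistrib_insert_a_left {S : Set (Mnn n)} (hi : a i ≠ aLink n h)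
    (hk : a k ≠ aLink n h) (hki : k ≠ i) :
    ¬ IsSTDistrib (insert (a k) S) {aLink n h, bLink n h, a i} := by
  refine not_isSTDistrib_of_disjoint (s := a k) (t₁ := aLink n h) (t₂ := a i) (by simp) (by simp)
    (by simp) (disjoint_a_a fun hk' => hk (congrArg a hk')) (disjoint_a_a hki) ?_
  rw [aLink_sup_a hi]
  exact fun hd => a_ne_bot k (hd.eq_bot_of_le (a_le_bLink k h))

theorem not_isSTDistrib_insert_a_right {S T : Set (Mnn n)} (hjS : b j ∈ S) (hiT : a i ∈ T)
    (hj : b j ≠ bLink n h) (hi : a i ≠ aLink n h) (hk : a k ≠ aLink n h) (hki : k ≠ i) :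
    ¬ IsSTDistrib S (insert (a k) T) := by
  refine not_isSTDistrib_of_disjoint hjS (Set.mem_insert _ _) (Set.mem_insert_of_mem _ hiT)
    (disjoint_b_a hj hk) (disjoint_b_a hj hi) ?_
  rw [a_sup_a h hki]
  exact fun hd => a_ne_bot _ (le_bot_iff.1 (hd (aLink_le_b h j) (a_le_bLink _ h)))

theorem exists_a_of_notMem {x : Mnn n} (hx : x ∈ star n) (hxS : x ∉ bLevel n \ {bLink n h})
    (hxT : x ∉ ({aLink n h, bLink n h, a i} : Set (Mnn n))) :
    ∃ k, a k = x ∧ a k ≠ aLink n h ∧ k ≠ i := by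
  simp only [Set.mem_insert_iff, Set.mem_singleton_iff, not_or] at hxT
  obtain ⟨hxa, hxb, hxi⟩ := hxT
  rw [star_eq_union] at hx
  obtain ⟨k, rfl⟩ := hx.resolve_right fun hb => hxS ⟨hb, hxb⟩
  exact ⟨k, rfl, hxa, fun hki => hxi (congrArg a hki)⟩

theorem maximalSTPair_bLevel_sdiff (hi : a i ≠ aLink n h) :
    MaximalSTPair n (bLevel n \ {bLink n h}) {aLink n h, bLink n h, a i} := by
  have hrev : b i.rev ≠ bLink n h := b_rev_ne_bLink hi
  have hmem : b i.rev ∈ bLevel n \ {bLink n h} := ⟨⟨_, rfl⟩, hrev⟩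
  have hT : ({aLink n h, bLink n h, a i} : Set (Mnn n)) ⊆ star n := by
    rintro _ (rfl | rfl | rfl) <;> exact ⟨nofun, nofun⟩
  have hdisj : Disjoint (bLevel n \ {bLink n h}) {aLink n h, bLink n h, a i} := by
    rw [Set.disjoint_right]
    rintro _ (rfl | rfl | rfl) ⟨hb, hne⟩
    · exact Set.disjoint_left.1 (disjoint_aLevel_bLevel n) ⟨_, rfl⟩ hb
    · exact hne rfl
    · exact Set.disjoint_left.1 (disjoint_aLevel_bLevel n) ⟨_, rfl⟩ hb
  refine .of_insert ?_ hT hdisj ⟨_, hmem⟩ ⟨_, Set.mem_insert _ _⟩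
    (isSTDistrib_bLevel_sdiff hi) ?_ ?_
  · rw [star_eq_union]
    exact Set.sdiff_subset.trans Set.subset_union_right
  · intro x hx hxS hxT
    obtain ⟨k, rfl, hk, hki⟩ := exists_a_of_notMem hx hxS hxT
    exact not_isSTDistrib_insert_a_left hi hk hki
  · intro x hx hxS hxT
    obtain ⟨k, rfl, hk, hki⟩ := exists_a_of_notMem hx hxS hxT
    exact not_isSTDistrib_insert_a_right hmem (by simp) hrev hi hk hki

theorem maximalSTPair_aLevel_sdiff (hj : b j ≠ bLink n h) :
    MaximalSTPair n (aLevel n \ {aLink n h}) {aLink n h, bLink n h, b j} := by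
  have hS : dual '' (bLevel n \ {bLink n h}) = aLevel n \ {aLink n h} := by
    rw [Set.image_sdiff dual_involutive.injective, image_dual_bLevel, Set.image_singleton,
      dual_bLink]
  have hT : dual '' {aLink n h, bLink n h, a j.rev} = {aLink n h, bLink n h, b j} := by
    rw [Set.image_insert_eq, Set.image_pair, dual_aLink, dual_bLink, dual, Fin.rev_rev,
      Set.insert_comm]
  rw [← hS, ← hT]
  exact (maximalSTPair_bLevel_sdiff (a_rev_ne_aLink hj)).image_dual

end Mnn

/-- S-level-minus-link pairs are maximal `ST`-pairs of `M_{n,n}`: `S` is one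
level minus its link, and `T` consists of the two links together with one
non-link element of the other level. -/
theorem s_level_minus_link_maximal (n : ℕ) (hn : 3 ≤ n) :
    (∀ i : Fin n, Mnn.a i ≠ Mnn.aLink n (by omega) →
      MaximalSTPair n (Mnn.bLevel n \ {Mnn.bLink n (by omega)})
        {Mnn.aLink n (by omega), Mnn.bLink n (by omega), Mnn.a i}) ∧
    (∀ j : Fin n, Mnn.b j ≠ Mnn.bLink n (by omega) →
      MaximalSTPair n (Mnn.aLevel n \ {Mnn.aLink n (by omega)})
        {Mnn.aLink n (by omega), Mnn.bLink n (by omega), Mnn.b j}) :=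
  ⟨fun _ => Mnn.maximalSTPair_bLevel_sdiff, fun _ => Mnn.maximalSTPair_aLevel_sdiff⟩
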